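/- arXiv:2405.04703 — 2 statements merged into one kernel-verified Lean document; each statement's English description precedes it below -/
import Mathlib

section
/- Let a≥1 and b≥2 be integers and G=G(a,b). For all 1≤i<j≤b, the Lin–Lu–Yau curvature satisfies κ_LLY(v_i,v_j)=(2a+b)/(2a+b−1), which is strictly greater than 1. -/
open scoped Classical
open Finset

noncomputable section

/-- The degree of a vertex `x` in the graph `G`. -/
def deg {V : Type*} [Fintype V] (G : SimpleGraph V) (x : V) : ℕ :=
  (Finset.univ.filter (fun y => G.Adj x y)).card

/-- The diameter of `G`: the maximum of the combinatorial distance over all pairs of vertices. -/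
def diam {V : Type*} [Fintype V] (G : SimpleGraph V) : ℕ :=
  Finset.univ.sup (fun xy : V × V => G.dist xy.1 xy.2)

/-- The probability measure `μ_x^p` of the lazy simple random walk at `x` with idleness `p`. -/
def mu {V : Type*} [Fintype V] (G : SimpleGraph V) (p : ℝ) (x : V) : V → ℝ :=
  fun z => if z = x then p else if G.Adj x z then (1 - p) / (deg G x : ℝ) else 0

/-- The Wasserstein distance `W₁(μ₁, μ₂)` with respect to the combinatorial distance of `G`:
the infimum of the total transport cost over all transport plans from `μ₁` to `μ₂`. -/
def W1 {V : Type*} [Fintype V] (G : SimpleGraph V) (μ₁ μ₂ : V → ℝ) : ℝ :=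
  sInf {c : ℝ | ∃ π : V → V → ℝ,
    (∀ x y, 0 ≤ π x y ∧ π x y ≤ 1) ∧
    (∀ x, ∑ y, π x y = μ₁ x) ∧
    (∀ y, ∑ x, π x y = μ₂ y) ∧
    c = ∑ x, ∑ y, (G.dist x y : ℝ) * π x y}

/-- The `p`-Ollivier-Ricci curvature `κ_p(x,y) = 1 - W₁(μ_x^p, μ_y^p)`. -/
def kappa {V : Type*} [Fintype V] (G : SimpleGraph V) (p : ℝ) (x y : V) : ℝ :=
  1 - W1 G (mu G p x) (mu G p y)

/-- The Lin-Lu-Yau curvature `κ_LLY(x,y) = lim_{p→1} κ_p(x,y)/(1-p)`. -/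
def kappaLLY {V : Type*} [Fintype V] (G : SimpleGraph V) (x y : V) : ℝ :=
  Filter.limUnder (nhdsWithin 1 (Set.Iio 1)) (fun p => kappa G p x y / (1 - p))

/-- `G` is Bonnet-Myers sharp if the infimum of `κ_LLY` over the edges equals `2/diam(G)`. -/
def BMSharp {V : Type*} [Fintype V] (G : SimpleGraph V) : Prop :=
  sInf {r : ℝ | ∃ x y, G.Adj x y ∧ r = kappaLLY G x y} = 2 / (diam G : ℝ)

/-- `G` is obtained from the complete graph on its vertex set by deleting a matching
(a set of pairwise disjoint edges, encoded as a symmetric irreflexive relation in which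
every vertex has at most one partner). -/
def IsMatchingDeletionOfComplete {V : Type*} (G : SimpleGraph V) : Prop :=
  ∃ M : V → V → Prop, Symmetric M ∧ (∀ x, ¬ M x x) ∧
    (∀ x y z, M x y → M x z → y = z) ∧
    (∀ x y, G.Adj x y ↔ x ≠ y ∧ ¬ M x y)

/-- The graph `G(a,b)` on `2a+b` vertices `u_1, …, u_{2a}, v_1, …, v_b` (encoded as
`Fin (2a+b)`, with `u_i` the index `i-1` and `v_j` the index `2a+j-1`), in which two distinct
vertices are adjacent unless they form a pair `{u_{2i-1}, u_{2i}}`, i.e. `G(a,b)` is the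
complete graph `K_{2a+b}` with a matching of size `a` deleted. -/
def Gab (a b : ℕ) : SimpleGraph (Fin (2*a+b)) where
  Adj x y := x ≠ y ∧ ¬((x : ℕ) < 2*a ∧ (y : ℕ) < 2*a ∧ (x : ℕ)/2 = (y : ℕ)/2)
  symm := by
    refine ⟨?_⟩
    intro x y h
    exact ⟨h.1.symm, fun hc => h.2 ⟨hc.2.1, hc.1, hc.2.2.symm⟩⟩
  loopless := by refine ⟨?_⟩; intro x h; exact h.1 rfl

/-- The antitree `AT(a_1, …, a_N)` on the disjoint union of sets `V_1, …, V_N` with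
`|V_k| = a_k` (0-indexed here: `V_k` is `Fin (a k)` for `k : Fin N`): two distinct vertices
are adjacent iff they lie in the same set or in consecutive sets. -/
def antitree (N : ℕ) (a : Fin N → ℕ) : SimpleGraph (Σ k : Fin N, Fin (a k)) where
  Adj x y := x ≠ y ∧
    ((x.1 : ℕ) = (y.1 : ℕ) ∨ (x.1 : ℕ) + 1 = (y.1 : ℕ) ∨ (y.1 : ℕ) + 1 = (x.1 : ℕ))
  symm := by
    refine ⟨?_⟩
    intro x y h
    refine ⟨h.1.symm, ?_⟩
    rcases h.2 with h2 | h2 | h2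
    · exact Or.inl h2.symm
    · exact Or.inr (Or.inr h2)
    · exact Or.inr (Or.inl h2)
  loopless := by refine ⟨?_⟩; intro x h; exact h.1 rfl

lemma W1_univ {V : Type*} [Fintype V] (G : SimpleGraph V) (x y : V) (hxy : x ≠ y)
    (hx : ∀ z, z ≠ x → G.Adj x z) (p q : ℝ) (hq : 0 ≤ q) (hqp : q ≤ p) (hp : p ≤ 1) :
    W1 G (fun z => if z = x then p else q) (fun z => if z = y then p else q) = p - q := by
  unfold W1
  apply IsLeast.csInf_eq
  constructor
  · refine ⟨fun z w => (if z = w then q else 0) +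
      (if z = x then (if w = y then p - q else 0) else 0), ?_, ?_, ?_, ?_⟩
    · intro z w
      dsimp only
      constructor
      · split_ifs <;> linarith
      · split_ifs with h1 h2 h3
        · exact absurd (h2.symm.trans (h1.trans h3)) hxy
        all_goals linarith
    · intro z
      rw [Finset.sum_add_distrib]
      by_cases h : z = x <;> simp [h]
    · intro w
      rw [Finset.sum_add_distrib]
      by_cases h : w = y <;> simp [h]
    · have h1 : ∀ z w : V, (G.dist z w : ℝ) * ((if z = w then q else 0) +
          (if z = x then (if w = y then p - q else 0) else 0)) =
          (if z = x then (if w = y then p - q else 0) else 0) := by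
        intro z w
        by_cases hzw : z = w
        · subst hzw
          by_cases h : z = x
          · subst h; simp [hxy]
          · simp [h]
        · by_cases h : z = x
          · by_cases h' : w = y
            · subst h; subst h'
              have : G.dist z w = 1 := SimpleGraph.dist_eq_one_iff_adj.2 (hx _ hxy.symm)
              simp [this, hzw]
            · simp [h', hzw]
          · simp [h, hzw]
      simp only [h1]
      simp
  · rintro c ⟨π, h0, hr, hc, rfl⟩
    have e1 : ∑ w, (G.dist x w : ℝ) * π x w ≤ ∑ z, ∑ w, (G.dist z w : ℝ) * π z w :=
      Finset.single_le_sum (f := fun z => ∑ w, (G.dist z w : ℝ) * π z w)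
        (fun z _ => Finset.sum_nonneg fun w _ => mul_nonneg (Nat.cast_nonneg _) (h0 z w).1)
        (Finset.mem_univ x)
    have e2 : ∑ w, (G.dist x w : ℝ) * π x w = ∑ w, (π x w - if w = x then π x x else 0) := by
      refine Finset.sum_congr rfl fun w _ => ?_
      by_cases h : w = x
      · subst h; simp
      · have : G.dist x w = 1 := SimpleGraph.dist_eq_one_iff_adj.2 (hx _ h)
        simp [this, h]
    have e3 : π x x ≤ ∑ z, π z x :=
      Finset.single_le_sum (f := fun z => π z x) (fun z _ => (h0 z x).1) (Finset.mem_univ x)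
    rw [hc x] at e3
    simp only [if_neg hxy] at e3
    rw [e2, Finset.sum_sub_distrib, hr x] at e1
    simp at e1
    linarith

lemma mu_univ {V : Type*} [Fintype V] (G : SimpleGraph V) (x : V)
    (hx : ∀ z, z ≠ x → G.Adj x z) (p : ℝ) :
    mu G p x = fun z => if z = x then p else (1 - p) / ((Fintype.card V : ℝ) - 1) := by
  have hd : deg G x = Fintype.card V - 1 := by
    unfold deg
    have : (Finset.univ.filter (fun y => G.Adj x y)) = Finset.univ.erase x := by
      ext z
      simp only [Finset.mem_filter, Finset.mem_univ, true_and, Finset.mem_erase, and_true]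
      exact ⟨fun h => h.ne', hx z⟩
    rw [this, Finset.card_erase_of_mem (Finset.mem_univ x), Finset.card_univ]
  have hc : 1 ≤ Fintype.card V := Fintype.card_pos_iff.2 ⟨x⟩
  funext z
  unfold mu
  by_cases h : z = x
  · simp [h]
  · simp [h, hx z h, hd, Nat.cast_sub hc]

lemma kappaLLY_univ {V : Type*} [Fintype V] (G : SimpleGraph V) (x y : V) (hxy : x ≠ y)
    (hx : ∀ z, z ≠ x → G.Adj x z) (hy : ∀ z, z ≠ y → G.Adj y z) :
    kappaLLY G x y = (Fintype.card V : ℝ) / ((Fintype.card V : ℝ) - 1) := by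
  have hn : (2 : ℝ) ≤ Fintype.card V := by
    exact_mod_cast Fintype.one_lt_card_iff.2 ⟨x, y, hxy⟩
  unfold kappaLLY
  apply Filter.Tendsto.limUnder_eq
  refine Filter.Tendsto.congr' ?_ tendsto_const_nhds
  have : Set.Ioo (1/2 : ℝ) 1 ∈ nhdsWithin (1:ℝ) (Set.Iio 1) :=
    Ioo_mem_nhdsLT (by norm_num)
  filter_upwards [this] with p hp
  obtain ⟨hp1, hp2⟩ := hp
  have hn' : (0:ℝ) < (Fintype.card V : ℝ) - 1 := by linarith
  have hp3 : 0 < 1 - p := by linarith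
  unfold kappa
  rw [mu_univ G x hx, mu_univ G y hy, W1_univ G x y hxy hx p _ (by positivity) _ hp2.le]
  · field_simp
    ring
  · rw [div_le_iff₀ hn']
    nlinarith

/-- In `G(a,b)` with `a ≥ 1`, `b ≥ 2`, every edge `v_i ∼ v_j` has
`κ_LLY = (2a+b)/(2a+b-1) > 1`. -/
theorem stmt3 (a b : ℕ) (ha : 1 ≤ a) (hb : 2 ≤ b) (i j : ℕ)
    (hi : 1 ≤ i) (hij : i < j) (hj : j ≤ b) :
    kappaLLY (Gab a b) ⟨2*a+i-1, by omega⟩ ⟨2*a+j-1, by omega⟩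
        = (2*a+b : ℝ) / ((2*a+b : ℝ) - 1) ∧
      (1 : ℝ) < (2*a+b : ℝ) / ((2*a+b : ℝ) - 1) := by
  have hb' : (2:ℝ) ≤ b := by exact_mod_cast hb
  have ha' : (1:ℝ) ≤ a := by exact_mod_cast ha
  constructor
  · rw [kappaLLY_univ]
    · simp
    · intro h
      have := congrArg Fin.val h
      simp only at this
      omega
    · intro z hz
      refine ⟨hz.symm, ?_⟩
      rintro ⟨h, -⟩
      simp only at h
      omega
    · intro z hz
      refine ⟨hz.symm, ?_⟩
      rintro ⟨h, -⟩
      simp only at h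
      omega
  · rw [lt_div_iff₀ (by linarith)]
    linarith
end
end

section
/- For all positive integers b and c, the symmetrical antitree AT(1,b,c,c,b,1) (which has diameter 5) is not Bonnet-Myers sharp; that is, there are no symmetrical antitrees with a_1=1 of diameter 5 that are Bonnet-Myers sharp. -/
open scoped Classical
open Finset

noncomputable section

lemma sum_mu {V : Type*} [Fintype V] (G : SimpleGraph V) (p : ℝ) (x : V) (f : V → ℝ) :
    ∑ z, f z * mu G p x z =
      p * f x + (1 - p) / (deg G x : ℝ) * ∑ z, (if G.Adj x z then f z else 0) := by
  have h : ∀ z, f z * mu G p x z = (if z = x then p * f z else 0) +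
      (1 - p) / (deg G x : ℝ) * (if G.Adj x z then f z else 0) := by
    intro z
    unfold mu
    by_cases hz : z = x
    · subst hz; simp; ring
    · by_cases ha : G.Adj x z
      · simp [hz, ha]; ring
      · simp [hz, ha]
  rw [Finset.sum_congr rfl (fun z _ => h z), Finset.sum_add_distrib, ← Finset.mul_sum]
  simp

lemma deg_pos_of_adj {V : Type*} [Fintype V] (G : SimpleGraph V) {x y : V} (h : G.Adj x y) :
    0 < deg G x := by
  unfold deg
  exact Finset.card_pos.mpr ⟨y, by simpa using h⟩

lemma deg_eq_sum {V : Type*} [Fintype V] (G : SimpleGraph V) (x : V) :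
    (deg G x : ℝ) = ∑ z, (if G.Adj x z then (1:ℝ) else 0) := by
  unfold deg
  simp

lemma sum_mu_one {V : Type*} [Fintype V] (G : SimpleGraph V) (p : ℝ) {x y : V}
    (h : G.Adj x y) : ∑ z, mu G p x z = 1 := by
  have h1 := sum_mu G p x (fun _ => 1)
  have h2 := deg_pos_of_adj G h
  have h3 : (deg G x : ℝ) ≠ 0 := by positivity
  simp only [one_mul] at h1
  rw [h1, ← deg_eq_sum]
  field_simp
  ring

lemma mu_nonneg {V : Type*} [Fintype V] (G : SimpleGraph V) (p : ℝ) (x : V)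
    (h0 : 0 ≤ p) (h1 : p ≤ 1) (z : V) : 0 ≤ mu G p x z := by
  unfold mu
  have : 0 ≤ 1 - p := by linarith
  split_ifs <;> positivity

lemma mu_le_one {V : Type*} [Fintype V] (G : SimpleGraph V) (p : ℝ) {x y : V}
    (h : G.Adj x y) (h0 : 0 ≤ p) (h1 : p ≤ 1) (z : V) : mu G p x z ≤ 1 := by
  rw [← sum_mu_one G p h]
  exact Finset.single_le_sum (f := mu G p x) (fun i _ => mu_nonneg G p x h0 h1 i)
    (Finset.mem_univ z)

def planSet {V : Type*} [Fintype V] (G : SimpleGraph V) (μ₁ μ₂ : V → ℝ) : Set ℝ :=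
  {c : ℝ | ∃ π : V → V → ℝ,
    (∀ x y, 0 ≤ π x y ∧ π x y ≤ 1) ∧
    (∀ x, ∑ y, π x y = μ₁ x) ∧
    (∀ y, ∑ x, π x y = μ₂ y) ∧
    c = ∑ x, ∑ y, (G.dist x y : ℝ) * π x y}

lemma planSet_nonempty {V : Type*} [Fintype V] (G : SimpleGraph V) (p : ℝ) {x y : V}
    (h : G.Adj x y) (h0 : 0 ≤ p) (h1 : p ≤ 1) :
    (planSet G (mu G p x) (mu G p y)).Nonempty := by
  refine ⟨_, fun u v => mu G p x u * mu G p y v, ?_, ?_, ?_, rfl⟩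
  · intro u v
    have a1 := mu_nonneg G p x h0 h1 u
    have a2 := mu_nonneg G p y h0 h1 v
    have a3 := mu_le_one G p h h0 h1 u
    have a4 := mu_le_one G p h.symm h0 h1 v
    exact ⟨mul_nonneg a1 a2, mul_le_one₀ a3 a2 a4⟩
  · intro u
    rw [← Finset.mul_sum, sum_mu_one G p h.symm, mul_one]
  · intro u
    rw [← Finset.sum_mul, sum_mu_one G p h, one_mul]

lemma planSet_bdd {V : Type*} [Fintype V] (G : SimpleGraph V) (μ₁ μ₂ : V → ℝ) :
    BddBelow (planSet G μ₁ μ₂) := by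
  refine ⟨0, ?_⟩
  rintro c ⟨π, h1, -, -, rfl⟩
  exact Finset.sum_nonneg fun u _ => Finset.sum_nonneg fun v _ =>
    mul_nonneg (Nat.cast_nonneg _) (h1 u v).1

lemma W1_ge {V : Type*} [Fintype V] (G : SimpleGraph V) (p : ℝ) {x y : V}
    (h : G.Adj x y) (h0 : 0 ≤ p) (h1 : p ≤ 1) (f : V → ℝ)
    (hf : ∀ u v, f v - f u ≤ G.dist u v) :
    ∑ z, f z * mu G p y z - ∑ z, f z * mu G p x z ≤ W1 G (mu G p x) (mu G p y) := by
  refine le_csInf (planSet_nonempty G p h h0 h1) ?_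
  rintro c ⟨π, hπ, hx, hy, rfl⟩
  have e1 : ∑ z, f z * mu G p y z = ∑ u, ∑ v, f v * π u v := by
    rw [Finset.sum_comm]
    refine Finset.sum_congr rfl fun v _ => ?_
    rw [← hy v, Finset.mul_sum]
  have e2 : ∑ z, f z * mu G p x z = ∑ u, ∑ v, f u * π u v := by
    refine Finset.sum_congr rfl fun v _ => ?_
    rw [← hx v, Finset.mul_sum]
  rw [e1, e2, ← Finset.sum_sub_distrib]
  refine Finset.sum_le_sum fun u _ => ?_
  rw [← Finset.sum_sub_distrib]
  refine Finset.sum_le_sum fun v _ => ?_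
  rw [← sub_mul]
  exact mul_le_mul_of_nonneg_right (hf u v) (hπ u v).1

lemma kappa_bound {V : Type*} [Fintype V] (G : SimpleGraph V) (p : ℝ) {x y : V}
    (h : G.Adj x y) (h0 : 0 ≤ p) (h1 : p < 1) (f : V → ℝ)
    (hf : ∀ u v, f v - f u ≤ G.dist u v) (hxy : f y - f x = 1) :
    kappa G p x y / (1 - p) ≤ 1 - ((∑ z, (if G.Adj y z then f z else 0)) / (deg G y : ℝ)
      - (∑ z, (if G.Adj x z then f z else 0)) / (deg G x : ℝ)) := by
  have hp : 0 < 1 - p := by linarith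
  have hw := W1_ge G p h h0 h1.le f hf
  rw [sum_mu, sum_mu] at hw
  rw [div_le_iff₀ hp]
  unfold kappa
  have : f y = 1 + f x := by linarith
  rw [this] at hw
  ring_nf at hw ⊢
  linarith

lemma W1_convex {V : Type*} [Fintype V] (G : SimpleGraph V) (p s : ℝ) {x y : V}
    (h : G.Adj x y) (h0 : 0 ≤ p) (h1 : p < 1) (hs0 : 0 < s) (hs1 : s ≤ 1) :
    W1 G (mu G (s * p + (1 - s)) x) (mu G (s * p + (1 - s)) y) ≤
      s * W1 G (mu G p x) (mu G p y) + (1 - s) := by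
  have key : (W1 G (mu G (s * p + (1 - s)) x) (mu G (s * p + (1 - s)) y) - (1 - s)) / s ≤
      W1 G (mu G p x) (mu G p y) := by
    refine le_csInf (planSet_nonempty G p h h0 h1.le) ?_
    rintro c ⟨π, hπ, hx, hy, rfl⟩
    rw [div_le_iff₀ hs0, sub_le_iff_le_add]
    have hmu : ∀ w z, mu G (s * p + (1 - s)) w z = s * mu G p w z +
        (if z = w then (1 - s) else 0) := by
      intro w z
      unfold mu
      split_ifs <;> ring
    refine csInf_le (planSet_bdd G _ _)
      ⟨fun u v => s * π u v + (if u = x then if v = y then (1 - s) else 0 else 0), ?_, ?_, ?_, ?_⟩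
    · intro u v
      have := hπ u v
      have a1 : 0 ≤ s * π u v := mul_nonneg hs0.le this.1
      have a2 : s * π u v ≤ s := mul_le_of_le_one_right hs0.le this.2
      dsimp only
      split_ifs <;> constructor <;> linarith
    · intro u
      rw [hmu, ← hx u, Finset.sum_add_distrib, Finset.mul_sum]
      by_cases hu : u = x <;> simp [hu]
    · intro v
      rw [hmu, ← hy v, Finset.sum_add_distrib, Finset.mul_sum]
      by_cases hu : v = y <;> simp [hu]
    · have hd : G.dist x y = 1 := SimpleGraph.dist_eq_one_iff_adj.mpr h
      simp only [mul_add, Finset.sum_add_distrib, mul_ite, mul_zero]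
      have : ∀ u : V, ∑ v : V, (if u = x then if v = y then (G.dist u v : ℝ) * (1 - s) else 0 else 0)
          = if u = x then (1 - s) else 0 := by
        intro u
        by_cases hu : u = x <;> simp [hu, hd]
      simp only [this]
      simp only [Finset.sum_ite_eq', Finset.mem_univ, if_true, Finset.sum_mul]
      congr 1
      refine Finset.sum_congr rfl fun u _ => Finset.sum_congr rfl fun v _ => by ring
  rw [div_le_iff₀ hs0] at key
  linarith

lemma kappaLLY_le {V : Type*} [Fintype V] (G : SimpleGraph V) {x y : V}
    (h : G.Adj x y) (f : V → ℝ)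
    (hf : ∀ u v, f v - f u ≤ G.dist u v) (hxy : f y - f x = 1) :
    kappaLLY G x y ≤ 1 - ((∑ z, (if G.Adj y z then f z else 0)) / (deg G y : ℝ)
      - (∑ z, (if G.Adj x z then f z else 0)) / (deg G x : ℝ)) := by
  set B := 1 - ((∑ z, (if G.Adj y z then f z else 0)) / (deg G y : ℝ)
      - (∑ z, (if G.Adj x z then f z else 0)) / (deg G x : ℝ)) with hB
  have hmono : ∀ p q : ℝ, 0 ≤ p → p ≤ q → q < 1 →
      kappa G p x y / (1 - p) ≤ kappa G q x y / (1 - q) := by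
    intro p q hp hpq hq
    have h1p : 0 < 1 - p := by linarith
    have h1q : 0 < 1 - q := by linarith
    have := W1_convex G p ((1 - q) / (1 - p)) h hp (by linarith) (by positivity)
      ((div_le_one h1p).mpr (by linarith))
    have e : (1 - q) / (1 - p) * p + (1 - (1 - q) / (1 - p)) = q := by
      field_simp
      ring
    rw [e] at this
    rw [le_div_iff₀ h1q]
    unfold kappa
    have e2 : (1 - W1 G (mu G p x) (mu G p y)) / (1 - p) * (1 - q) =
      (1 - q) / (1 - p) - (1 - q) / (1 - p) * W1 G (mu G p x) (mu G p y) := by ring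
    rw [e2]
    linarith
  let F : ℝ → ℝ := fun p => kappa G p x y / (1 - p)
  have hg : MonotoneOn (fun p => F (max p 0)) (Set.Iio 1) := by
    intro p hp q hq hpq
    exact hmono _ _ (le_max_right _ _) (max_le_max hpq le_rfl) (max_lt hq one_pos)
  have hbd : BddAbove ((fun p => F (max p 0)) '' Set.Iio 1) := by
    refine ⟨B, ?_⟩
    rintro _ ⟨p, hp, rfl⟩
    exact kappa_bound G _ h (le_max_right _ _) (max_lt hp one_pos) f hf hxy
  have ht := MonotoneOn.tendsto_nhdsLT hg hbd
  have hev : ∀ᶠ p in nhdsWithin (1:ℝ) (Set.Iio 1), F (max p 0) = F p := by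
    have : Set.Ioi (0:ℝ) ∈ nhdsWithin (1:ℝ) (Set.Iio 1) :=
      mem_nhdsWithin_of_mem_nhds (Ioi_mem_nhds one_pos)
    filter_upwards [this] with p hp
    rw [max_eq_left (le_of_lt hp)]
  have ht2 := ht.congr' hev
  have e : kappaLLY G x y = _ := ht2.limUnder_eq
  rw [e]
  refine csSup_le ⟨_, 0, by simp, rfl⟩ ?_
  rintro _ ⟨p, hp, rfl⟩
  exact kappa_bound G _ h (le_max_right _ _) (max_lt hp one_pos) f hf hxy

lemma lvl_lip {N : ℕ} {a : Fin N → ℕ} {u v : Σ k : Fin N, Fin (a k)}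
    (w : (antitree N a).Walk u v) : (v.1 : ℕ) ≤ (u.1 : ℕ) + w.length := by
  induction w with
  | nil => simp
  | cons h p ih =>
    have := h.2
    simp only [SimpleGraph.Walk.length_cons]
    omega

lemma walk_up {N : ℕ} {a : Fin N → ℕ} (ha : ∀ k, 0 < a k) (n : ℕ) :
    ∀ (u v : Σ k : Fin N, Fin (a k)), (u.1 : ℕ) + n + 1 = v.1 →
    ∃ w : (antitree N a).Walk u v, w.length = n + 1 := by
  induction n with
  | zero =>
    intro u v h
    have hadj : (antitree N a).Adj u v :=
      ⟨by rintro rfl; omega, Or.inr (Or.inl (by omega))⟩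
    exact ⟨hadj.toWalk, by simp⟩
  | succ n ih =>
    intro u v h
    let k : Fin N := ⟨(u.1 : ℕ) + 1, by have := v.1.2; omega⟩
    let m : Σ k : Fin N, Fin (a k) := ⟨k, ⟨0, ha k⟩⟩
    have hm : (m.1 : ℕ) = (u.1 : ℕ) + 1 := rfl
    have hadj : (antitree N a).Adj u m :=
      ⟨fun e => by rw [← e] at hm; omega, Or.inr (Or.inl hm.symm)⟩
    obtain ⟨w, hw⟩ := ih m v (by omega)
    exact ⟨SimpleGraph.Walk.cons hadj w, by simp [hw]⟩

lemma walk_any {a : Fin 6 → ℕ} (ha : ∀ k, 0 < a k)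
    (u v : Σ k : Fin 6, Fin (a k)) :
    ∃ w : (antitree 6 a).Walk u v, w.length ≤ 5 := by
  have hu := u.1.2
  have hv := v.1.2
  rcases lt_trichotomy (u.1 : ℕ) (v.1 : ℕ) with h | h | h
  · obtain ⟨w, hw⟩ := walk_up ha ((v.1 : ℕ) - u.1 - 1) u v (by omega)
    exact ⟨w, by omega⟩
  · by_cases e : u = v
    · subst e
      exact ⟨SimpleGraph.Walk.nil, by simp⟩
    · have hadj : (antitree 6 a).Adj u v := ⟨e, Or.inl h⟩
      exact ⟨hadj.toWalk, by simp⟩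
  · obtain ⟨w, hw⟩ := walk_up ha ((u.1 : ℕ) - v.1 - 1) v u (by omega)
    exact ⟨w.reverse, by rw [SimpleGraph.Walk.length_reverse]; omega⟩

lemma lvl_dist {a : Fin 6 → ℕ} (ha : ∀ k, 0 < a k)
    (u v : Σ k : Fin 6, Fin (a k)) :
    ((v.1 : ℕ) : ℝ) - ((u.1 : ℕ) : ℝ) ≤ (antitree 6 a).dist u v := by
  obtain ⟨w0, -⟩ := walk_any ha u v
  obtain ⟨w, hw⟩ := w0.reachable.exists_walk_length_eq_dist
  have := lvl_lip w
  rw [hw] at this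
  rw [sub_le_iff_le_add]
  exact_mod_cast (by omega)

lemma antitree_sum {N : ℕ} {a : Fin N → ℕ} (g : Fin N → ℝ) (x : Σ k : Fin N, Fin (a k)) :
    ∑ z, (if (antitree N a).Adj x z then g z.1 else 0) =
      ∑ k, (a k : ℝ) * (if ((x.1 : ℕ) = (k : ℕ) ∨ (x.1 : ℕ) + 1 = (k : ℕ) ∨
        (k : ℕ) + 1 = (x.1 : ℕ)) then g k else 0) - g x.1 := by
  have h : ∀ z : Σ k : Fin N, Fin (a k), (if (antitree N a).Adj x z then g z.1 else 0) =
      (if ((x.1 : ℕ) = (z.1 : ℕ) ∨ (x.1 : ℕ) + 1 = (z.1 : ℕ) ∨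
        (z.1 : ℕ) + 1 = (x.1 : ℕ)) then g z.1 else 0) - (if z = x then g x.1 else 0) := by
    intro z
    unfold antitree
    by_cases e : z = x
    · subst e; simp
    · simp [e, Ne.symm e]
  rw [Finset.sum_congr rfl (fun z _ => h z), Finset.sum_sub_distrib, Fintype.sum_sigma]
  simp

/-- No symmetrical antitree `AT(1,b,c,c,b,1)` of diameter 5 (with `a_1 = 1`) is
Bonnet-Myers sharp. -/
theorem stmt15 (b c : ℕ) (hb : 0 < b) (hc : 0 < c) :
    ¬ BMSharp (antitree 6 ![1, b, c, c, b, 1]) := by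
  intro hS
  have ha : ∀ k, 0 < (![1, b, c, c, b, 1] : Fin 6 → ℕ) k := by
    intro k
    fin_cases k <;> simp [hb, hc]
  generalize hadef : (![1, b, c, c, b, 1] : Fin 6 → ℕ) = a at *
  have a0 : a 0 = 1 := by rw [← hadef]; rfl
  have a1 : a 1 = b := by rw [← hadef]; rfl
  have a2 : a 2 = c := by rw [← hadef]; rfl
  have a3 : a 3 = c := by rw [← hadef]; rfl
  have a4 : a 4 = b := by rw [← hadef]; rfl
  have a5 : a 5 = 1 := by rw [← hadef]; rfl
  let P : (k : Fin 6) → (Σ k : Fin 6, Fin (a k)) := fun k => ⟨k, ⟨0, ha k⟩⟩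
  have hadj : ∀ k l : Fin 6, (k : ℕ) + 1 = l → (antitree 6 a).Adj (P k) (P l) := by
    intro k l h
    refine ⟨fun e => ?_, Or.inr (Or.inl h)⟩
    have : k = l := congrArg Sigma.fst e
    subst this
    omega
  have hd5 : diam (antitree 6 a) ≤ 5 := by
    unfold diam
    refine Finset.sup_le fun uv _ => ?_
    obtain ⟨w, hw⟩ := walk_any ha uv.1 uv.2
    exact (SimpleGraph.dist_le w).trans hw
  have hd1 : 1 ≤ diam (antitree 6 a) := by
    unfold diam
    have h1 : (antitree 6 a).dist (P 0) (P 1) = 1 :=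
      SimpleGraph.dist_eq_one_iff_adj.mpr (hadj 0 1 rfl)
    have := Finset.le_sup (f := fun xy : (Σ k : Fin 6, Fin (a k)) × (Σ k : Fin 6, Fin (a k)) =>
      (antitree 6 a).dist xy.1 xy.2) (Finset.mem_univ (P 0, P 1))
    simp only [h1] at this
    exact this
  have hbd : BddBelow {r : ℝ | ∃ x y, (antitree 6 a).Adj x y ∧ r = kappaLLY (antitree 6 a) x y} := by
    refine Set.Finite.bddBelow ?_
    refine (Set.finite_range (fun xy : (Σ k : Fin 6, Fin (a k)) × (Σ k : Fin 6, Fin (a k)) =>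
      kappaLLY (antitree 6 a) xy.1 xy.2)).subset ?_
    rintro r ⟨x, y, -, rfl⟩
    exact ⟨(x, y), rfl⟩
  have hlow : ∀ k l : Fin 6, (k : ℕ) + 1 = l → 2 / 5 ≤ kappaLLY (antitree 6 a) (P k) (P l) := by
    intro k l h
    have h1 := csInf_le hbd ⟨P k, P l, hadj k l h, rfl⟩
    unfold BMSharp at hS
    rw [hS] at h1
    refine le_trans ?_ h1
    have h5 : (diam (antitree 6 a) : ℝ) ≤ 5 := by exact_mod_cast hd5
    have h6 : (0:ℝ) < (diam (antitree 6 a) : ℝ) := by exact_mod_cast hd1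
    gcongr
  have hmain : ∀ k l : Fin 6, (k : ℕ) + 1 = l → _ := fun k l h =>
    (hlow k l h).trans (kappaLLY_le (antitree 6 a) (hadj k l h) (fun z => ((z.1 : ℕ) : ℝ))
      (fun u v => lvl_dist ha u v) (by
        show ((l : ℕ) : ℝ) - ((k : ℕ) : ℝ) = 1
        rw [← h]; push_cast; ring))
  have h01 := hmain 0 1 rfl
  have h12 := hmain 1 2 rfl
  have h23 := hmain 2 3 rfl
  simp only [deg_eq_sum] at h01 h12 h23
  simp only [antitree_sum (fun k : Fin 6 => ((k : ℕ) : ℝ)), antitree_sum (fun _ : Fin 6 => (1 : ℝ)),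
    Fin.sum_univ_six, a0, a1, a2, a3, a4, a5, P] at h01 h12 h23
  norm_num at h01 h12 h23
  have hB : (1:ℝ) ≤ b := by exact_mod_cast hb
  have hC : (1:ℝ) ≤ c := by exact_mod_cast hc
  have e1 : (1 + (b:ℝ) + c - 1) = b + c := by ring
  have e2 : ((c:ℝ) + c + b - 1) = b + c + c - 1 := by ring
  have e0 : (b:ℝ) / b = 1 := div_self (by positivity)
  rw [e1] at h01 h12
  rw [e2] at h23
  rw [e0] at h01
  have p1 : 0 < (b:ℝ) + c := by linarith
  have p2 : 0 < (b:ℝ) + c + c - 1 := by linarith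
  have e3 : ((c:ℝ) * 2 + c * 3 + b * 4 - 3) / (b + c + c - 1) =
      5 - ((b:ℝ) + c * 2 + c * 3 - 2) / (b + c + c - 1) := by
    field_simp
    ring
  rw [e3] at h23
  have hX : ((b:ℝ) + c * 2 - 1) / (b + c) = 8 / 5 := by linarith
  have hY : ((b:ℝ) + c * 2 + c * 3 - 2) / (b + c + c - 1) = 11 / 5 := by linarith
  rw [div_eq_iff p1.ne'] at hX
  rw [div_eq_iff p2.ne'] at hY
  have n1 : (3 * c + 1 : ℝ) = 6 * b := by linarith
  have n2 : 3 * c + 1 = 6 * b := by exact_mod_cast n1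
  omega
end
end
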